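/- Let A ⊆ {0,1}^n be nonempty with indicator function f : {0,1}^n → {0,1}, and let M ∈ {0,1}^{r×n} be any matrix over GF(2). Define p_M(z) = |{x ∈ A : Mx = z}| / |A| for z ∈ {0,1}^r, and let U_r denote the uniform distribution on {0,1}^r. Then ‖p_M − U_r‖²_tvd ≤ (2^{2n} / |A|²) · ∑_{s ∈ {0,1}^r, s ≠ 0} \hat{f}(M^T s)². -/

import Mathlib

open Finset

/-- The Fourier coefficient of `g : {0,1}^m → ℝ` at `v ∈ {0,1}^m`:
`ĝ(v) = 2^{-m} ∑_x g(x)·(−1)^{x·v}`. -/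
noncomputable def booleanFourier {m : ℕ} (g : (Fin m → ZMod 2) → ℝ)
    (v : Fin m → ZMod 2) : ℝ :=
  ((2 : ℝ) ^ m)⁻¹ * ∑ x : Fin m → ZMod 2, g x * (-1 : ℝ) ^ (∑ i, (x i).val * (v i).val)

/-- The total variation distance `(1/2) ∑_ω |p ω − q ω|` between two distributions on a
finite set. -/
noncomputable def tvDist {Ω : Type*} [Fintype Ω] (p q : Ω → ℝ) : ℝ :=
  (1 / 2) * ∑ ω, |p ω - q ω|

/-!
Pushing a weight `f` forward along `M` turns the Fourier coefficient at `s` into the coefficient of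
`f` at `Mᵀ s`, up to normalization, because `(M x) · s = x · (Mᵀ s)`. Subtracting the uniform
distribution from a distribution kills the zeroth coefficient and leaves all others unchanged.
Cauchy–Schwarz bounds the total variation distance by the `ℓ²` distance, which Parseval expresses
through the remaining coefficients.
-/

open Matrix

section WalshCharacters

variable {ι : Type*} [Fintype ι]

/-- The Walsh character `x ↦ (-1) ^ (x · v)` of the group `{0,1}^ι`, as a bundled additive
character, so that Mathlib's orthogonality relation applies to it. -/
noncomputable def walshChar (v : ι → ZMod 2) : AddChar (ι → ZMod 2) ℝ :=
  (AddChar.zmodChar 2 (neg_one_sq (R := ℝ))).compAddMonoidHom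
    (dotProductBilin (ZMod 2) (ZMod 2) v).toAddMonoidHom

lemma walshChar_apply (v x : ι → ZMod 2) :
    walshChar v x = AddChar.zmodChar 2 (neg_one_sq (R := ℝ)) (v ⬝ᵥ x) :=
  rfl

lemma walshChar_comm (v x : ι → ZMod 2) : walshChar v x = walshChar x v := by
  rw [walshChar_apply, walshChar_apply, dotProduct_comm]

lemma walshChar_eq_neg_one_pow (v x : ι → ZMod 2) :
    walshChar v x = (-1) ^ (∑ i, (x i).val * (v i).val) := by
  rw [walshChar_comm, walshChar_apply, ← AddChar.zmodChar_apply' (neg_one_sq (R := ℝ))]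
  simp [dotProduct]

lemma walshChar_mulVec {κ : Type*} [Fintype κ] (M : Matrix κ ι (ZMod 2)) (s : κ → ZMod 2)
    (x : ι → ZMod 2) : walshChar s (M *ᵥ x) = walshChar (Mᵀ *ᵥ s) x := by
  rw [walshChar_apply, walshChar_apply, dotProduct_mulVec, mulVec_transpose]

@[simp]
lemma walshChar_zero : walshChar (0 : ι → ZMod 2) = 0 := by
  ext x
  simp [walshChar_apply]

lemma walshChar_eq_zero_iff {v : ι → ZMod 2} : walshChar v = 0 ↔ v = 0 := by
  classical
  refine ⟨fun hv => ?_, fun hv => hv ▸ walshChar_zero⟩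
  by_contra hne
  obtain ⟨i, hi⟩ := Function.ne_iff.mp hne
  have hvi : v i = 1 := Fin.eq_one_of_ne_zero _ hi
  have hsign : walshChar v (Pi.single i 1) = -1 := by
    simp [walshChar_apply, hvi, AddChar.zmodChar_apply, ZMod.val_one]
  norm_num [hv] at hsign

lemma sum_walshChar [DecidableEq ι] (v : ι → ZMod 2) :
    ∑ x, walshChar v x = if v = 0 then 2 ^ Fintype.card ι else 0 := by
  classical
  simp [AddChar.sum_eq_ite, walshChar_eq_zero_iff]

lemma sum_walshChar_mul_walshChar [DecidableEq ι] (x y : ι → ZMod 2) :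
    ∑ v, walshChar v x * walshChar v y = if x = y then 2 ^ Fintype.card ι else 0 := by
  have hxy : x + y = 0 ↔ x = y := by rw [← ZModModule.sub_eq_add, sub_eq_zero]
  simp only [← AddChar.map_add_eq_mul, walshChar_comm _ (x + y), sum_walshChar, hxy]

lemma sum_sq_sum_mul_walshChar [DecidableEq ι] (g : (ι → ZMod 2) → ℝ) :
    ∑ v, (∑ x, g x * walshChar v x) ^ 2 = 2 ^ Fintype.card ι * ∑ x, g x ^ 2 :=
  calc ∑ v, (∑ x, g x * walshChar v x) ^ 2
      = ∑ v, ∑ x, ∑ y, g x * g y * (walshChar v x * walshChar v y) := by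
        simp only [sq, sum_mul_sum, mul_mul_mul_comm]
    _ = ∑ x, ∑ y, g x * g y * ∑ v, walshChar v x * walshChar v y := by
        rw [sum_comm]
        refine sum_congr rfl fun x _ => ?_
        rw [sum_comm]
        simp only [mul_sum]
    _ = 2 ^ Fintype.card ι * ∑ x, g x ^ 2 := by
        simp [sum_walshChar_mul_walshChar, ← sum_mul, ← sq, mul_comm]

end WalshCharacters

section BooleanFourier

variable {m : ℕ}

lemma booleanFourier_eq_sum_walshChar (g : (Fin m → ZMod 2) → ℝ) (v : Fin m → ZMod 2) :
    booleanFourier g v = (2 ^ m)⁻¹ * ∑ x, g x * walshChar v x := by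
  simp only [booleanFourier, walshChar_eq_neg_one_pow]

lemma booleanFourier_zero (g : (Fin m → ZMod 2) → ℝ) :
    booleanFourier g 0 = (2 ^ m)⁻¹ * ∑ x, g x := by
  simp [booleanFourier_eq_sum_walshChar]

lemma booleanFourier_sub_const (g : (Fin m → ZMod 2) → ℝ) (c : ℝ) {v : Fin m → ZMod 2}
    (hv : v ≠ 0) : booleanFourier (fun x => g x - c) v = booleanFourier g v := by
  simp [booleanFourier_eq_sum_walshChar, sub_mul, sum_sub_distrib, ← mul_sum, sum_walshChar, hv]

lemma booleanFourier_div_const (g : (Fin m → ZMod 2) → ℝ) (c : ℝ) (v : Fin m → ZMod 2) :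
    booleanFourier (fun x => g x / c) v = booleanFourier g v / c := by
  simp only [booleanFourier, div_mul_eq_mul_div, ← sum_div]
  rw [mul_div_assoc]

lemma sum_booleanFourier_sq (g : (Fin m → ZMod 2) → ℝ) :
    ∑ v, booleanFourier g v ^ 2 = (2 ^ m)⁻¹ * ∑ x, g x ^ 2 := by
  simp only [booleanFourier_eq_sum_walshChar, mul_pow, ← mul_sum, sum_sq_sum_mul_walshChar,
    Fintype.card_fin]
  field_simp

lemma booleanFourier_sum_fiber {n r : ℕ} (f : (Fin n → ZMod 2) → ℝ)
    (M : Matrix (Fin r) (Fin n) (ZMod 2)) (s : Fin r → ZMod 2) :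
    booleanFourier (fun z => ∑ x with M *ᵥ x = z, f x) s =
      2 ^ n / 2 ^ r * booleanFourier f (Mᵀ *ᵥ s) := by
  have sum_over_fibers : ∑ z, (∑ x with M *ᵥ x = z, f x) * walshChar s z =
      ∑ x, f x * walshChar (Mᵀ *ᵥ s) x := by
    simp only [← walshChar_mulVec, sum_mul]
    rw [← sum_fiberwise univ (M *ᵥ ·)]
    refine sum_congr rfl fun z _ => sum_congr rfl fun x hx => ?_
    rw [(mem_filter.mp hx).2]
  rw [booleanFourier_eq_sum_walshChar, booleanFourier_eq_sum_walshChar, sum_over_fibers]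
  field_simp

end BooleanFourier

lemma tvDist_sq_le {Ω : Type*} [Fintype Ω] (p q : Ω → ℝ) :
    tvDist p q ^ 2 ≤ 1 / 4 * (Fintype.card Ω * ∑ ω, (p ω - q ω) ^ 2) := by
  have cauchy_schwarz : (∑ ω, |p ω - q ω|) ^ 2 ≤ Fintype.card Ω * ∑ ω, (p ω - q ω) ^ 2 := by
    simpa only [sq_abs, card_univ] using
      sq_sum_le_card_mul_sum_sq (s := univ) (f := fun ω => |p ω - q ω|)
  rw [tvDist, mul_pow]
  linarith

lemma sum_sub_uniform_sq {r : ℕ} {p : (Fin r → ZMod 2) → ℝ} (hp : ∑ z, p z = 1) :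
    ∑ z, (p z - (2 ^ r)⁻¹) ^ 2 = 2 ^ r * ∑ s ∈ univ \ {0}, booleanFourier p s ^ 2 := by
  have zeroth_coeff : booleanFourier (fun z => p z - (2 ^ r)⁻¹) 0 = 0 := by
    simp [booleanFourier_zero, hp]
  have parseval := sum_booleanFourier_sq fun z => p z - (2 ^ r)⁻¹
  rw [← sum_sdiff (subset_univ {0}), sum_singleton, zeroth_coeff, zero_pow two_ne_zero,
    add_zero, eq_inv_mul_iff_mul_eq₀ (by positivity)] at parseval
  rw [← parseval]
  congr 1
  refine sum_congr rfl fun s hs => ?_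
  rw [booleanFourier_sub_const p _ (by simpa using hs)]

lemma tvDist_uniform_sq_le {r : ℕ} {p : (Fin r → ZMod 2) → ℝ} (hp : ∑ z, p z = 1) :
    tvDist p (fun _ => (2 ^ r)⁻¹) ^ 2 ≤
      1 / 4 * ((2 ^ r) ^ 2 * ∑ s ∈ univ \ {0}, booleanFourier p s ^ 2) := by
  refine (tvDist_sq_le p _).trans_eq ?_
  rw [sum_sub_uniform_sq hp]
  simp [sq, mul_assoc]

theorem stmt5_general {n r : ℕ} (f : (Fin n → ZMod 2) → ℝ) (hf : ∑ x, f x ≠ 0)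
    (M : Matrix (Fin r) (Fin n) (ZMod 2)) :
    tvDist (fun z => (∑ x with M *ᵥ x = z, f x) / ∑ x, f x) (fun _ => (2 ^ r)⁻¹) ^ 2 ≤
      1 / 4 * (2 ^ (2 * n) / (∑ x, f x) ^ 2 *
        ∑ s ∈ univ \ {0}, booleanFourier f (Mᵀ *ᵥ s) ^ 2) := by
  have total_mass : ∑ z, (∑ x with M *ᵥ x = z, f x) / ∑ x, f x = 1 := by
    rw [← sum_div, sum_fiberwise, div_self hf]
  refine (tvDist_uniform_sq_le total_mass).trans_eq ?_
  simp only [booleanFourier_div_const, booleanFourier_sum_fiber, mul_sum]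
  refine sum_congr rfl fun s _ => ?_
  field_simp
  ring

/-- for nonempty `A ⊆ {0,1}^n` with indicator `f`, any `M ∈ {0,1}^{r×n}`
over GF(2), `p_M(z) = |{x ∈ A : Mx = z}|/|A|`, and `U_r` uniform on `{0,1}^r`:
`‖p_M − U_r‖²_tvd ≤ (2^{2n}/|A|²) · ∑_{s ≠ 0} f̂(Mᵀ s)²`. -/
theorem stmt5 (n r : ℕ) (A : Finset (Fin n → ZMod 2)) (hA : A.Nonempty)
    (M : Matrix (Fin r) (Fin n) (ZMod 2)) :
    (tvDist
        (fun z : Fin r → ZMod 2 =>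
          ((A.filter (fun x => Matrix.mulVec M x = z)).card : ℝ) / (A.card : ℝ))
        (fun _ : Fin r → ZMod 2 => ((2 : ℝ) ^ r)⁻¹)) ^ 2
      ≤ (2 : ℝ) ^ (2 * n) / (A.card : ℝ) ^ 2 *
          ∑ s ∈ (univ : Finset (Fin r → ZMod 2)) \ {0},
            booleanFourier (fun x : Fin n → ZMod 2 => if x ∈ A then (1 : ℝ) else 0)
              (Matrix.mulVec M.transpose s) ^ 2 := by
  have sharp := stmt5_general (fun x => if x ∈ A then (1 : ℝ) else 0) (by simp [hA.ne_empty]) M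
  simp only [sum_ite_mem, univ_inter, filter_inter, sum_const, nsmul_one] at sharp
  exact sharp.trans (mul_le_of_le_one_left (by positivity) (by norm_num))
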